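/- arXiv:2112.14044 — 2 statements merged into one kernel-verified Lean document; each statement's English description precedes it below -/
import Mathlib

section
/- Draw-and-delete commutes with arrangement via uniform deletion: for every multiset m : Sym X (K+1), (DD m).bind arr = (arr m).bind del, as distributions on Fin K → X. -/
universe u

/-- Accumulation: send a tuple to its multiset of values. -/
def acc {X : Type u} {K : ℕ} (v : Fin K → X) : Sym X K :=
  ⟨(List.ofFn v : List X), by simp⟩

/-- Pushforward of the uniform distribution on permutations under `σ ↦ v ∘ σ`. -/
noncomputable def perm {X : Type u} {K : ℕ} (v : Fin K → X) : PMF (Fin K → X) :=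
  PMF.map (fun σ => v ∘ σ) (PMF.uniformOfFintype (Equiv.Perm (Fin K)))

/-- Uniform deletion of one coordinate: pushforward of the uniform distribution
on `Fin (K+1)` under `i ↦ v ∘ Fin.succAbove i`. -/
noncomputable def del {X : Type u} {K : ℕ} (v : Fin (K + 1) → X) : PMF (Fin K → X) :=
  PMF.map (fun i => v ∘ Fin.succAbove i) (PMF.uniformOfFintype (Fin (K + 1)))

theorem acc_surj {X : Type u} {K : ℕ} (m : Sym X K) : ∃ v : Fin K → X, acc v = m := by
  obtain ⟨s, hs⟩ := m
  induction s using Quotient.inductionOn with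
  | _ l =>
    have hl : l.length = K := by simpa using hs
    subst hl
    exact ⟨l.get, Subtype.ext (by simp [acc])⟩

/-- Build a permutation sending `j` to `i`, and acting as `σ` on the complements. -/
def glue {K : ℕ} (j : Fin (K + 1)) (p : Fin (K + 1) × Equiv.Perm (Fin K)) :
    Equiv.Perm (Fin (K + 1)) :=
  ((finSuccEquiv' j).trans (Equiv.optionCongr p.2)).trans (finSuccEquiv' p.1).symm

theorem glue_self {K : ℕ} (j : Fin (K + 1)) (p : Fin (K + 1) × Equiv.Perm (Fin K)) :
    glue j p j = p.1 := by
  simp [glue]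

theorem glue_succAbove {K : ℕ} (j : Fin (K + 1)) (p : Fin (K + 1) × Equiv.Perm (Fin K))
    (k : Fin K) : glue j p (j.succAbove k) = p.1.succAbove (p.2 k) := by
  simp [glue]

theorem glue_bijective {K : ℕ} (j : Fin (K + 1)) : Function.Bijective (glue j) := by
  rw [Fintype.bijective_iff_injective_and_card]
  constructor
  · rintro ⟨i, σ⟩ ⟨i', σ'⟩ h
    have h1 : i = i' := by
      have := congrArg (fun τ => τ j) h
      simpa only [glue_self] using this
    subst h1
    have h2 : σ = σ' := by
      ext1 k
      have := congrArg (fun τ => τ (j.succAbove k)) h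
      simp only [glue_succAbove] at this
      exact Fin.succAbove_right_injective this
    rw [h2]
  · simp [Fintype.card_perm, Nat.factorial_succ]

theorem map_uniform_bij {A B Y : Type*} [Fintype A] [Nonempty A] [Fintype B] [Nonempty B]
    (e : A → B) (he : Function.Bijective e) (f : B → Y) :
    PMF.map f (PMF.uniformOfFintype B) = PMF.map (f ∘ e) (PMF.uniformOfFintype A) := by
  classical
  ext y
  simp only [PMF.map_apply, tsum_fintype, PMF.uniformOfFintype_apply, Function.comp]
  rw [Fintype.card_of_bijective he]
  exact (he.sum_comp (fun b => if y = f b then ((Fintype.card B : ENNReal))⁻¹ else 0)).symm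

theorem uniform_prod {A B Y : Type*} [Fintype A] [Nonempty A] [Fintype B] [Nonempty B]
    (g : A × B → Y) :
    PMF.map g (PMF.uniformOfFintype (A × B)) =
      (PMF.uniformOfFintype A).bind
        (fun a => PMF.map (fun b => g (a, b)) (PMF.uniformOfFintype B)) := by
  classical
  ext y
  simp only [PMF.map_apply, PMF.bind_apply, tsum_fintype, PMF.uniformOfFintype_apply,
    Fintype.sum_prod_type, Finset.mul_sum, Fintype.card_prod]
  refine Finset.sum_congr rfl fun a _ => Finset.sum_congr rfl fun b _ => ?_
  split_ifs
  · rw [Nat.cast_mul, ENNReal.mul_inv] <;> simp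
  · simp

theorem perm_eq {X : Type u} {K : ℕ} (v : Fin K → X) :
    perm v = PMF.map (fun (σ : Equiv.Perm (Fin K)) (k : Fin K) => v (σ k))
      (PMF.uniformOfFintype (Equiv.Perm (Fin K))) := by
  have h : perm v = PMF.map (fun s : Fin K → Fin K => v ∘ s)
      (PMF.map (fun σ : Equiv.Perm (Fin K) => (σ : Fin K → Fin K))
        (PMF.uniformOfFintype (Equiv.Perm (Fin K)))) := rfl
  rw [h, PMF.map_comp]
  rfl

/-- Draw-and-delete commutes with arrangement via uniform deletion:
drawing-and-deleting and then arranging equals arranging and then uniformly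
deleting a coordinate. -/
theorem DD_bind_arr {X : Type u} {K : ℕ}
    (arr : {n : ℕ} → Sym X n → PMF (Fin n → X))
    (harr : ∀ {n : ℕ} (v : Fin n → X), arr (acc v) = perm v)
    (DD : Sym X (K + 1) → PMF (Sym X K))
    (hDD : ∀ v : Fin (K + 1) → X, DD (acc v) = PMF.map acc (del v))
    (m : Sym X (K + 1)) :
    (DD m).bind arr = (arr m).bind del := by
  obtain ⟨v, rfl⟩ := acc_surj m
  rw [hDD, harr, PMF.bind_map]
  have e1 : (arr ∘ acc : (Fin K → X) → PMF (Fin K → X)) = perm := funext fun w => harr w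
  rw [e1]
  have e2 : (perm : (Fin K → X) → PMF (Fin K → X)) = fun w => _ := funext perm_eq
  rw [e2, perm_eq]
  unfold del
  rw [PMF.bind_map, PMF.bind_map]
  have key : ∀ j : Fin (K + 1),
      PMF.map (fun τ : Equiv.Perm (Fin (K + 1)) => fun k => v (τ (j.succAbove k)))
        (PMF.uniformOfFintype (Equiv.Perm (Fin (K + 1)))) =
      (PMF.uniformOfFintype (Fin (K + 1))).bind (fun i =>
        PMF.map (fun σ : Equiv.Perm (Fin K) => fun k => v (i.succAbove (σ k)))
          (PMF.uniformOfFintype (Equiv.Perm (Fin K)))) := by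
    intro j
    rw [map_uniform_bij (glue j) (glue_bijective j)]
    simp only [Function.comp_def, glue_succAbove]
    rw [uniform_prod]
  have swap : ∀ (p : PMF (Equiv.Perm (Fin (K + 1)))) (q : PMF (Fin (K + 1)))
      (f : Equiv.Perm (Fin (K + 1)) → Fin (K + 1) → (Fin K → X)),
      p.bind (fun τ => PMF.map (f τ) q) = q.bind (fun j => PMF.map (fun τ => f τ j) p) :=
    fun p q f => PMF.bind_comm p q fun τ j => PMF.pure (f τ j)
  refine Eq.trans ?_ (swap _ _ (fun τ j k => v (τ (j.succAbove k)))).symm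
  simp only [key, PMF.bind_const]
  rfl
end

section
/- Frequentist learning inverts the multinomial: for every p : PMF X and K ≥ 1, (mn K p).bind Flrn = p. -/
open scoped ENNReal

universe u

theorem tsum_prod_pi {X : Type u} : ∀ (K : ℕ) (f : Fin K → X → ℝ≥0∞),
    ∑' v : Fin K → X, ∏ i, f i (v i) = ∏ i, ∑' x, f i x := by
  intro K
  induction K with
  | zero => intro f; simp
  | succ n ih =>
    intro f
    rw [← (Fin.consEquiv (fun _ : Fin (n + 1) => X)).tsum_eq, ENNReal.tsum_prod',
      Fin.prod_univ_succ, ← ih, ← ENNReal.tsum_mul_right]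
    refine tsum_congr fun a => ?_
    rw [← ENNReal.tsum_mul_left]
    refine tsum_congr fun w => ?_
    simp [Fin.consEquiv, Fin.prod_univ_succ]

theorem tsum_marginal {X : Type u} [DecidableEq X] {K : ℕ} (p : PMF X) (i : Fin K) (x : X) :
    ∑' v : Fin K → X, (∏ j, p (v j)) * (if v i = x then 1 else 0) = p x := by
  have h := tsum_prod_pi K
    (fun j y => p y * (if j = i then (if y = x then 1 else 0) else 1))
  have h1 : ∀ v : Fin K → X,
      (∏ j, p (v j) * (if j = i then (if v j = x then (1 : ℝ≥0∞) else 0) else 1))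
        = (∏ j, p (v j)) * (if v i = x then 1 else 0) := by
    intro v
    rw [Finset.prod_mul_distrib, Finset.prod_ite_eq' Finset.univ i]
    simp
  simp only [h1] at h
  rw [h, Finset.prod_eq_single i]
  · simp
  · intro j _ hj
    simp [hj, p.tsum_coe]
  · simp

theorem count_acc {X : Type u} [DecidableEq X] {K : ℕ} (v : Fin K → X) (x : X) :
    (Multiset.count x (acc v).toMultiset : ℝ≥0∞) = ∑ i, if v i = x then 1 else 0 := by
  have h : (acc v).toMultiset = Finset.univ.val.map v := by
    simp [acc, Sym.toMultiset, List.ofFn_eq_map, Fin.univ_val_map]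
  rw [h, Multiset.count_map, Finset.sum_boole]
  simp only [eq_comm (a := x)]
  rfl

/-- Frequentist learning inverts the multinomial: `iid` is the distribution of
`K` independent samples of `p` (mass `∏ i, p (v i)`), the multinomial is
`mn K p = PMF.map acc iid`, and `Flrn` is frequentist learning, assigning to `x`
the probability (multiplicity of `x`)/`K`. -/
theorem mn_bind_Flrn {X : Type u} [DecidableEq X] {K : ℕ} (hK : 1 ≤ K) (p : PMF X)
    (iid : PMF (Fin K → X))
    (hiid : ∀ v : Fin K → X, iid v = ∏ i, p (v i))
    (Flrn : Sym X K → PMF X)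
    (hFlrn : ∀ (m : Sym X K) (x : X),
      Flrn m x = (Multiset.count x m.toMultiset : ℝ≥0∞) / (K : ℝ≥0∞)) :
    (PMF.map acc iid).bind Flrn = p := by
  ext x
  rw [PMF.bind_map, PMF.bind_apply]
  have hK0 : (K : ℝ≥0∞) ≠ 0 := by
    exact_mod_cast (by omega : K ≠ 0)
  simp only [Function.comp, hFlrn, hiid, count_acc, ← mul_div_assoc, Finset.mul_sum]
  simp only [div_eq_mul_inv]
  rw [ENNReal.tsum_mul_right, Summable.tsum_finsetSum (fun _ _ => ENNReal.summable)]
  simp only [tsum_marginal, Finset.sum_const, Finset.card_univ, Fintype.card_fin, nsmul_eq_mul]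
  rw [mul_comm, ← mul_assoc, ENNReal.inv_mul_cancel hK0 (ENNReal.natCast_ne_top K), one_mul]
end
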